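/- For every complex s with Re(s) > 1, ∑'_{(m,k)} 1/(m² + mk + 4k²)^s = ζ(s)·L(χ_{-15}, s) + L(χ_{-3}, s)·L(χ_5, s), where ζ is the Riemann zeta function. -/

import Mathlib

/-- The quadratic Dirichlet character modulo 3:
`χ₋₃(n) = 1` if `n ≡ 1 (mod 3)`, `-1` if `n ≡ 2 (mod 3)`, `0` if `3 ∣ n`. -/
def chiNeg3 (n : ℕ) : ℤ :=
  if n % 3 = 1 then 1 else if n % 3 = 2 then -1 else 0

/-- The quadratic Dirichlet character modulo 5 given by the Legendre symbol `(n/5)`. -/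
def chi5 (n : ℕ) : ℤ :=
  if n % 5 = 1 ∨ n % 5 = 4 then 1 else if n % 5 = 2 ∨ n % 5 = 3 then -1 else 0

/-- The quadratic Dirichlet character modulo 15, `χ₋₁₅(n) = (n/3)·(n/5)`. -/
def chiNeg15 (n : ℕ) : ℤ := chiNeg3 n * chi5 n

/-- The Dirichlet `L`-series `L(χ, s) = ∑_{n ≥ 1} χ(n) n^{-s}`. -/
noncomputable def LSer (χ : ℕ → ℤ) (s : ℂ) : ℂ :=
  ∑' n : ℕ, (χ (n + 1) : ℂ) / ((n : ℂ) + 1) ^ s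

def qf (a b c : ℤ) (v : ℤ × ℤ) : ℤ := a * v.1 ^ 2 + b * v.1 * v.2 + c * v.2 ^ 2

noncomputable def rr (a b c n : ℤ) : ℕ := Set.ncard {v : ℤ × ℤ | qf a b c v = n}

def EqvF (F G : ℤ × ℤ → ℤ) : Prop := ∃ e : (ℤ × ℤ) ≃ (ℤ × ℤ), ∀ v, F v = G (e v)

lemma EqvF.trans {F G H : ℤ × ℤ → ℤ} (h : EqvF F G) (h' : EqvF G H) : EqvF F H := by
  obtain ⟨e, he⟩ := h
  obtain ⟨e', he'⟩ := h'
  exact ⟨e.trans e', fun v => by rw [he, he']; rfl⟩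

lemma EqvF.rr_eq {a b c a' b' c' : ℤ} (h : EqvF (qf a b c) (qf a' b' c')) (n : ℤ) :
    rr a b c n = rr a' b' c' n := by
  obtain ⟨e, he⟩ := h
  unfold rr
  have : {v : ℤ × ℤ | qf a b c v = n} = e ⁻¹' {v : ℤ × ℤ | qf a' b' c' v = n} := by
    ext v; simp [he]
  rw [this]
  apply Set.ncard_preimage_of_injective_subset_range e.injective
  simp

def shiftE (q : ℤ) : (ℤ × ℤ) ≃ (ℤ × ℤ) where
  toFun v := (v.1 + q * v.2, v.2)
  invFun v := (v.1 - q * v.2, v.2)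
  left_inv v := by simp
  right_inv v := by simp

lemma eqv_shift (a b c q : ℤ) : EqvF (qf a b c) (qf a (b - 2 * a * q) (c - b * q + a * q ^ 2)) :=
  ⟨shiftE q, fun v => by simp [qf, shiftE]; ring⟩

lemma eqv_swap (a b c : ℤ) : EqvF (qf a b c) (qf c b a) :=
  ⟨Equiv.prodComm _ _, fun v => by simp [qf]; ring⟩

def negE : (ℤ × ℤ) ≃ (ℤ × ℤ) where
  toFun v := (-v.1, v.2)
  invFun v := (-v.1, v.2)
  left_inv v := by simp
  right_inv v := by simp

lemma eqv_neg (a b c : ℤ) : EqvF (qf a b c) (qf a (-b) c) :=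
  ⟨negE, fun v => by simp [qf, negE]⟩

lemma eqv_212 : EqvF (qf 2 1 2) (qf 3 3 2) := by
  have h1 := eqv_shift 2 1 2 1
  have h2 := eqv_neg 2 (-3) 3
  have h3 := eqv_swap 2 3 3
  norm_num at h1 h2
  exact (h1.trans h2).trans h3

lemma class_lemma (k : ℕ) : ∀ a b c : ℤ, 0 < a → a ≤ k → b ^ 2 - 4 * a * c = -15 →
    EqvF (qf a b c) (qf 1 1 4) ∨ EqvF (qf a b c) (qf 3 3 2) := by
  induction k with
  | zero => intro a b c h1 h2; simp at h2; omega
  | succ k ih =>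
    intro a b c ha hk hd
    obtain ⟨q, hq⟩ : ∃ q, q = (b + a) / (2 * a) := ⟨_, rfl⟩
    have hsh := eqv_shift a b c q
    obtain ⟨r, hr⟩ : ∃ r, r = b - 2 * a * q := ⟨_, rfl⟩
    obtain ⟨c', hc'⟩ : ∃ r, r = c - b * q + a * q ^ 2 := ⟨_, rfl⟩
    rw [← hr, ← hc'] at hsh
    have hd' : r ^ 2 - 4 * a * c' = -15 := by rw [← hd, hr, hc']; ring
    have hr1 : -a ≤ r := by
      have := Int.mul_ediv_self_le (x := b + a) (k := 2 * a) (by omega)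
      rw [← hq] at this
      linarith
    have hr2 : r < a := by
      have := Int.lt_mul_ediv_self_add (x := b + a) (k := 2 * a) (by omega)
      rw [← hq] at this
      linarith
    have hc0 : 0 < c' := by nlinarith
    by_cases hac : a ≤ c'
    · have ha2 : a ≤ 2 := by nlinarith
      interval_cases a
      · have : r = -1 := by
          interval_cases r
          · rfl
          · omega
        subst this
        have : c' = 4 := by omega
        subst this
        exact Or.inl (hsh.trans (by simpa using eqv_neg 1 (-1) 4))
      · right
        have h21 := eqv_212
        have h22 := eqv_neg 2 (-1) 2
        interval_cases r
        · omega
        · have : c' = 2 := by omega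
          subst this
          exact hsh.trans (EqvF.trans (by simpa using h22) h21)
        · omega
        · have : c' = 2 := by omega
          subst this
          exact hsh.trans h21
    · have := ih c' r a hc0 (by push_cast at hk; omega) (by rw [← hd']; ring)
      have h2 := hsh.trans (eqv_swap a r c')
      rcases this with h | h
      · exact Or.inl (h2.trans h)
      · exact Or.inr (h2.trans h)

lemma qf114_mod (v : ℤ × ℤ) : qf 1 1 4 v % 3 = 0 ∨ qf 1 1 4 v % 3 = 1 := by
  have h : qf 1 1 4 v = (v.1 - v.2) ^ 2 + 3 * (v.1 * v.2 + v.2 ^ 2) := by simp [qf]; ring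
  rw [h]
  have : (v.1 - v.2) % 3 = 0 ∨ (v.1 - v.2) % 3 = 1 ∨ (v.1 - v.2) % 3 = 2 := by omega
  rcases this with h | h | h <;> simp [Int.add_emod, pow_two, Int.mul_emod, h]

lemma qf332_mod (v : ℤ × ℤ) : qf 3 3 2 v % 3 = 0 ∨ qf 3 3 2 v % 3 = 2 := by
  have h : qf 3 3 2 v = 2 * v.2 ^ 2 + 3 * (v.1 ^ 2 + v.1 * v.2) := by simp [qf]; ring
  rw [h]
  have : v.2 % 3 = 0 ∨ v.2 % 3 = 1 ∨ v.2 % 3 = 2 := by omega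
  rcases this with h | h | h <;> simp [Int.add_emod, pow_two, Int.mul_emod, h]

lemma class1 {a b c : ℤ} (ha : 0 < a) (hd : b ^ 2 - 4 * a * c = -15)
    (h : ∀ v, qf a b c v % 3 ≠ 2) (n : ℤ) : rr a b c n = rr 1 1 4 n := by
  rcases class_lemma a.toNat a b c ha (by omega) hd with h1 | ⟨e, he⟩
  · exact h1.rr_eq n
  · have := h (e.symm (0, 1))
    rw [he] at this
    simp [qf] at this

lemma class2 {a b c : ℤ} (ha : 0 < a) (hd : b ^ 2 - 4 * a * c = -15)
    (h : ∀ v, qf a b c v % 3 ≠ 1) (n : ℤ) : rr a b c n = rr 3 3 2 n := by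
  rcases class_lemma a.toNat a b c ha (by omega) hd with ⟨e, he⟩ | h1
  · have := h (e.symm (1, 0))
    rw [he] at this
    simp [qf] at this
  · exact h1.rr_eq n

lemma qf_finite {a b c : ℤ} (ha : 0 < a) (hd : b ^ 2 - 4 * a * c = -15) (n : ℤ) :
    {v : ℤ × ℤ | qf a b c v = n}.Finite := by
  have hc : 0 < c := by nlinarith
  apply Set.Finite.subset
    ((Set.finite_Icc (-(4 * c * n)) (4 * c * n)).prod (Set.finite_Icc (-(4 * a * n)) (4 * a * n)))
  rintro ⟨x, y⟩ h
  simp only [Set.mem_ofPred_eq, qf] at h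
  have h1 : 15 * y ^ 2 ≤ 4 * a * n := by
    have : 4 * a * n = (2 * a * x + b * y) ^ 2 + 15 * y ^ 2 := by
      rw [← h]; linear_combination (-y^2) * hd
    nlinarith [sq_nonneg (2 * a * x + b * y)]
  have h2 : 15 * x ^ 2 ≤ 4 * c * n := by
    have : 4 * c * n = (2 * c * y + b * x) ^ 2 + 15 * x ^ 2 := by
      rw [← h]; linear_combination (-x^2) * hd
    nlinarith [sq_nonneg (2 * c * y + b * x)]
  simp only [Set.mem_prod, Set.mem_Icc]
  generalize 4 * a * n = A at *
  generalize 4 * c * n = C at *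
  refine ⟨⟨?_, ?_⟩, ?_, ?_⟩ <;> nlinarith [Int.le_self_sq x, Int.le_self_sq (-x), Int.le_self_sq y, Int.le_self_sq (-y), sq_nonneg x, sq_nonneg y]

/-- the index-`p` sublattice -/
lemma card_sub {a b c t k : ℤ} (p : ℤ) (hp : 0 < p) (hk : a * t ^ 2 + b * t + c = p * k) (n : ℤ) :
    Set.ncard {v : ℤ × ℤ | qf a b c v = p * n ∧ p ∣ v.1 - t * v.2} = rr (a * p) (2 * a * t + b) k n := by
  unfold rr
  symm
  apply Set.ncard_congr (fun v _ => (p * v.1 + t * v.2, v.2))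
  · rintro ⟨z, y⟩ h
    simp only [Set.mem_ofPred_eq, qf] at h ⊢
    refine ⟨?_, by simp⟩
    rw [← h]
    linear_combination y ^ 2 * hk
  · rintro ⟨z, y⟩ ⟨z', y'⟩ _ _ h
    simp only [Prod.mk.injEq] at h ⊢
    obtain ⟨h1, rfl⟩ := h
    refine ⟨?_, rfl⟩
    have : p * z = p * z' := by linarith
    exact mul_left_cancel₀ hp.ne' this
  · rintro ⟨x, y⟩ ⟨h1, z, hz⟩
    refine ⟨(z, y), ?_, ?_⟩
    · simp only [Set.mem_ofPred_eq, qf] at h1 hz ⊢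
      apply mul_left_cancel₀ hp.ne'
      rw [← h1]
      have : x = p * z + t * y := by linarith
      subst this
      linear_combination (-y ^ 2) * hk
    · simp only [Prod.mk.injEq, and_true] at hz ⊢
      linarith

lemma card_pp {a b c : ℤ} (p : ℤ) (hp : 0 < p) (n : ℤ) :
    Set.ncard {v : ℤ × ℤ | qf a b c v = p * n ∧ p ∣ v.1 ∧ p ∣ v.2} =
      if p ∣ n then rr a b c (n / p) else 0 := by
  split_ifs with h
  · obtain ⟨m, rfl⟩ := h
    rw [Int.mul_ediv_cancel_left _ hp.ne']
    unfold rr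
    symm
    apply Set.ncard_congr (fun v _ => (p * v.1, p * v.2))
    · rintro ⟨z, y⟩ h
      simp only [Set.mem_ofPred_eq, qf] at h ⊢
      refine ⟨?_, by simp⟩
      rw [← h]
      ring
    · rintro ⟨z, y⟩ ⟨z', y'⟩ _ _ h
      simp only [Prod.mk.injEq] at h ⊢
      exact ⟨mul_left_cancel₀ hp.ne' h.1, mul_left_cancel₀ hp.ne' h.2⟩
    · rintro ⟨x, y⟩ ⟨h1, ⟨z, hz⟩, ⟨w, hw⟩⟩
      refine ⟨(z, w), ?_, ?_⟩
      · simp only [Set.mem_ofPred_eq, qf] at h1 hz hw ⊢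
        apply mul_left_cancel₀ hp.ne'
        apply mul_left_cancel₀ hp.ne'
        rw [← h1]
        subst hz hw
        ring
      · simp at hz hw ⊢
        exact ⟨hz.symm, hw.symm⟩
  · convert Set.ncard_empty (ℤ × ℤ)
    ext ⟨x, y⟩
    simp only [Set.mem_ofPred_eq, Set.mem_empty_iff_false, iff_false]
    rintro ⟨h1, ⟨z, hz⟩, ⟨w, hw⟩⟩
    simp only [qf] at h1 hz hw
    apply h
    refine ⟨a * z ^ 2 + b * z * w + c * w ^ 2, ?_⟩
    apply mul_left_cancel₀ hp.ne'
    rw [← h1]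
    subst hz hw
    ring
lemma zmod5_aux (p : ℕ) (h : p = 5) : (0 : ZMod p) ^ 2 = -15 := by
  subst h
  decide

lemma chi15_mod (p : ℕ) : chiNeg15 p = chiNeg15 (p % 60) := by
  unfold chiNeg15 chiNeg3 chi5
  have h1 : p % 60 % 3 = p % 3 := by omega
  have h2 : p % 60 % 5 = p % 5 := by omega
  rw [h1, h2]

lemma legendre15 (p : ℕ) [Fact p.Prime] (h2 : p ≠ 2) (h3 : p ≠ 3) (h5 : p ≠ 5) :
    legendreSym p (-15) = chiNeg15 p := by
  have hp : p.Prime := Fact.out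
  have g2 : p % 2 = 1 := (hp.eq_two_or_odd).resolve_left h2
  have g3 : p % 3 ≠ 0 := fun h =>
    h3 ((Nat.prime_dvd_prime_iff_eq Nat.prime_three hp).1 (Nat.dvd_of_mod_eq_zero h)).symm
  have g5 : p % 5 ≠ 0 := fun h =>
    h5 ((Nat.prime_dvd_prime_iff_eq Nat.prime_five hp).1 (Nat.dvd_of_mod_eq_zero h)).symm
  rw [jacobiSym.legendreSym.to_jacobiSym, jacobiSym.mod_right (-15) (Nat.odd_iff.2 g2), chi15_mod]
  have e : 4 * (-15 : ℤ).natAbs = 60 := rfl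
  rw [e]
  have q2 : p % 60 % 2 = 1 := by omega
  have q3 : p % 60 % 3 ≠ 0 := by omega
  have q5 : p % 60 % 5 ≠ 0 := by omega
  have q : p % 60 < 60 := Nat.mod_lt _ (by norm_num)
  generalize p % 60 = r at *
  interval_cases r <;> first | omega | (norm_num [chiNeg15, chiNeg3, chi5])

lemma trichotomy {a b c : ℤ} (hd : b ^ 2 - 4 * a * c = -15) (p : ℕ) (hp : p.Prime) (h3 : p ≠ 3)
    (hpa : ¬ (p : ℤ) ∣ a) :
    (chiNeg15 p = 1 ∧ ∃ t t' : ℤ,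
      (∀ v : ℤ × ℤ, (p : ℤ) ∣ qf a b c v ↔ (p : ℤ) ∣ v.1 - t * v.2 ∨ (p : ℤ) ∣ v.1 - t' * v.2) ∧
      ∀ v : ℤ × ℤ, (p : ℤ) ∣ v.1 - t * v.2 → (p : ℤ) ∣ v.1 - t' * v.2 → (p : ℤ) ∣ v.1 ∧ (p : ℤ) ∣ v.2) ∨
    (chiNeg15 p = 0 ∧ ∃ t : ℤ, ∀ v : ℤ × ℤ, (p : ℤ) ∣ qf a b c v ↔ (p : ℤ) ∣ v.1 - t * v.2) ∨
    (chiNeg15 p = -1 ∧ ∀ v : ℤ × ℤ, (p : ℤ) ∣ qf a b c v → (p : ℤ) ∣ v.1 ∧ (p : ℤ) ∣ v.2) := by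
  have : Fact p.Prime := ⟨hp⟩
  by_cases h2 : p = 2
  · subst h2
    left
    refine ⟨by decide, 0, 1, ?_, ?_⟩
    · have ha : a % 2 = 1 := by push_cast at hpa; omega
      have hb : b % 2 = 1 := by
        rcases Int.emod_two_eq_zero_or_one b with h | h
        · exfalso
          obtain ⟨k, rfl⟩ : ∃ k, b = 2 * k := ⟨b / 2, by omega⟩
          have : 4 * (k ^ 2 - a * c) = -15 := by linarith
          omega
        · exact h
      obtain ⟨k, rfl⟩ : ∃ k, b = 2 * k + 1 := ⟨b / 2, by omega⟩
      have hk : a * c = k * (k + 1) + 4 := by linarith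
      have hc : c % 2 = 0 := by
        have := Int.even_mul_succ_self k
        rw [Int.even_iff] at this
        have h : (a * c) % 2 = 0 := by omega
        rw [Int.mul_emod, ha] at h
        omega
      rintro ⟨x, y⟩
      simp only [qf]
      push_cast
      simp only [Int.dvd_iff_emod_eq_zero]
      rcases Int.emod_two_eq_zero_or_one x with h | h <;>
      rcases Int.emod_two_eq_zero_or_one y with h' | h' <;>
      simp [Int.add_emod, Int.sub_emod, Int.mul_emod, pow_two, h, h', ha, hc]
    · rintro ⟨x, y⟩ h h'
      push_cast at *
      simp at *
      omega
  have two : (2 : ZMod p) ≠ 0 := by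
    intro h
    have := (ZMod.natCast_eq_zero_iff 2 p).1 (by exact_mod_cast h)
    exact h2 ((Nat.prime_dvd_prime_iff_eq hp Nat.prime_two).1 this)
  have ha : (a : ZMod p) ≠ 0 := fun h => hpa ((ZMod.intCast_zmod_eq_zero_iff_dvd a p).1 h)
  have hD : (b : ZMod p) ^ 2 - 4 * a * c = -15 := by exact_mod_cast congrArg (Int.cast : ℤ → ZMod p) hd
  have key : ∀ s : ZMod p, s ^ 2 = -15 → ∃ t t' : ℤ, (2 * a * t : ZMod p) = s - b ∧ (2 * a * t' : ZMod p) = - s - b ∧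
      (∀ v : ℤ × ℤ, (p : ℤ) ∣ qf a b c v ↔ (p : ℤ) ∣ v.1 - t * v.2 ∨ (p : ℤ) ∣ v.1 - t' * v.2) := by
    intro s hs
    obtain ⟨t, ht⟩ := ZMod.intCast_surjective ((s - (b : ZMod p)) / (2 * (a : ZMod p)))
    obtain ⟨t', ht'⟩ := ZMod.intCast_surjective ((- s - (b : ZMod p)) / (2 * (a : ZMod p)))
    have e1 : (2 * a * t : ZMod p) = s - b := by rw [ht]; field_simp
    have e2 : (2 * a * t' : ZMod p) = -s - b := by rw [ht']; field_simp
    refine ⟨t, t', e1, e2, ?_⟩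
    rintro ⟨x, y⟩
    simp only [qf, ← ZMod.intCast_zmod_eq_zero_iff_dvd]
    push_cast
    rw [← mul_eq_zero]
    have : (4 * a : ZMod p) * (a * x ^ 2 + b * x * y + c * y ^ 2) =
        (4 * a * a) * ((x - t * y) * (x - t' * y)) := by
      have : (4 * a * a : ZMod p) * ((x - t * y) * (x - t' * y)) =
        (2 * a * x - (2 * a * t) * y) * (2 * a * x - (2 * a * t') * y) := by ring
      rw [this, e1, e2]
      linear_combination (-y^2 : ZMod p) * hD - (-y^2 : ZMod p) * hs
    have four : (4 : ZMod p) ≠ 0 := by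
      have : (4 : ZMod p) = 2 * 2 := by norm_num
      rw [this]; exact mul_ne_zero two two
    constructor
    · intro h
      rw [h, mul_zero] at this
      exact (mul_eq_zero.1 this.symm).resolve_left (by simp [four, ha])
    · intro h
      rw [h, mul_zero] at this
      exact (mul_eq_zero.1 this).resolve_left (by simp [four, ha])
  by_cases h5 : p = 5
  · right; left
    refine ⟨by subst h5; decide, ?_⟩
    obtain ⟨t, t', e1, e2, h⟩ := key 0 (zmod5_aux p h5)
    refine ⟨t, ?_⟩
    have ett : (t : ZMod p) = t' := by
      have : (2 * a : ZMod p) * t = 2 * a * t' := by rw [e1, e2]; ring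
      exact mul_left_cancel₀ (mul_ne_zero two ha) this
    intro v
    rw [h v]
    simp only [← ZMod.intCast_zmod_eq_zero_iff_dvd]
    push_cast
    rw [ett, or_self]
  have hL := legendre15 p h2 h3 h5
  have h15 : (-15 : ZMod p) ≠ 0 := by
    intro h
    have h' : ((15 : ℕ) : ZMod p) = 0 := by push_cast; linear_combination -h
    rw [ZMod.natCast_eq_zero_iff] at h'
    have : p ∣ 3 * 5 := h'
    rcases (Nat.Prime.dvd_mul hp).1 this with g | g
    · exact h3 ((Nat.prime_dvd_prime_iff_eq hp Nat.prime_three).1 g)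
    · exact h5 ((Nat.prime_dvd_prime_iff_eq hp Nat.prime_five).1 g)
  have h15' : (((-15 : ℤ)) : ZMod p) ≠ 0 := by push_cast; exact h15
  rcases legendreSym.eq_one_or_neg_one p h15' with hh | hh
  · left
    refine ⟨by rw [← hL, hh], ?_⟩
    obtain ⟨s, hs⟩ := (legendreSym.eq_one_iff p h15').1 hh
    push_cast at hs
    have hs' : s ^ 2 = -15 := by rw [hs]; ring
    obtain ⟨t, t', e1, e2, h⟩ := key s hs'
    refine ⟨t, t', h, ?_⟩
    rintro ⟨x, y⟩
    simp only [← ZMod.intCast_zmod_eq_zero_iff_dvd]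
    push_cast
    intro g1 g2
    have hs0 : s ≠ 0 := by rintro rfl; apply h15; rw [← hs']; ring
    have hy : (y : ZMod p) = 0 := by
      have : (2 * s) * (y : ZMod p) = 0 := by
        linear_combination (2 * a) * g2 - (2 * a) * g1 - (y : ZMod p) * e1 + (y : ZMod p) * e2
      exact (mul_eq_zero.1 this).resolve_left (mul_ne_zero two hs0)
    refine ⟨?_, hy⟩
    rw [hy] at g1
    simpa using g1
  · right; right
    refine ⟨by rw [← hL, hh], ?_⟩
    have hns := (legendreSym.eq_neg_one_iff p).1 hh
    rintro ⟨x, y⟩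
    simp only [qf, ← ZMod.intCast_zmod_eq_zero_iff_dvd]
    push_cast
    intro h
    have hy : (y : ZMod p) = 0 := by
      by_contra hy
      apply hns
      refine ⟨(2 * a * x + b * y) / y, ?_⟩
      field_simp
      push_cast
      linear_combination (y : ZMod p)^2 * (- hD) - 4 * a * h
    refine ⟨?_, hy⟩
    rw [hy] at h
    have : (a : ZMod p) * x ^ 2 = 0 := by linear_combination h
    simpa [ha] using this

lemma hecke {a b c a' b' c' : ℤ} (ha : 0 < a) (hd : b ^ 2 - 4 * a * c = -15) (p : ℕ) (hp : p.Prime)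
    (h3 : p ≠ 3) (hpa : ¬ (p : ℤ) ∣ a)
    (hT : ∀ t k : ℤ, a * t ^ 2 + b * t + c = p * k → ∀ n, rr (a * p) (2 * a * t + b) k n = rr a' b' c' n)
    (n : ℤ) :
    (rr a b c (p * n) : ℤ) = (1 + chiNeg15 p) * rr a' b' c' n
      - chiNeg15 p * (if (p : ℤ) ∣ n then (rr a b c (n / p) : ℤ) else 0) := by
  have hp0 : (0 : ℤ) < p := by exact_mod_cast hp.pos
  have fin := qf_finite ha hd (p * n)
  have hpp := card_pp (a := a) (b := b) (c := c) p hp0 n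
  have hpp' : ((if (p : ℤ) ∣ n then (rr a b c (n / p) : ℤ) else 0)) =
    (Set.ncard {v : ℤ × ℤ | qf a b c v = p * n ∧ (p : ℤ) ∣ v.1 ∧ (p : ℤ) ∣ v.2} : ℤ) := by
    rw [hpp]; split_ifs <;> simp
  rw [hpp']
  have hA : ∀ t : ℤ, (p : ℤ) ∣ qf a b c (t, 1) →
      Set.ncard {v : ℤ × ℤ | qf a b c v = p * n ∧ (p : ℤ) ∣ v.1 - t * v.2} = rr a' b' c' n := by
    rintro t ⟨k, hk⟩
    have hk' : a * t ^ 2 + b * t + c = p * k := by simpa [qf] using hk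
    rw [card_sub p hp0 hk', hT t k hk']
  rcases trichotomy hd p hp h3 hpa with ⟨hc, t, t', h, hb⟩ | ⟨hc, t, h⟩ | ⟨hc, h⟩
  · have h1 := hA t ((h _).2 (Or.inl (by simp)))
    have h2 := hA t' ((h _).2 (Or.inr (by simp)))
    have := Set.ncard_union_add_ncard_inter
      {v : ℤ × ℤ | qf a b c v = p * n ∧ (p : ℤ) ∣ v.1 - t * v.2}
      {v : ℤ × ℤ | qf a b c v = p * n ∧ (p : ℤ) ∣ v.1 - t' * v.2}
      (fin.subset (fun v hv => hv.1)) (fin.subset (fun v hv => hv.1))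
    rw [h1, h2] at this
    have e1 : {v : ℤ × ℤ | qf a b c v = p * n ∧ (p : ℤ) ∣ v.1 - t * v.2} ∪
      {v : ℤ × ℤ | qf a b c v = p * n ∧ (p : ℤ) ∣ v.1 - t' * v.2} = {v : ℤ × ℤ | qf a b c v = p * n} := by
      ext v
      simp only [Set.mem_union, Set.mem_ofPred_eq, ← and_or_left, ← h v]
      exact ⟨fun g => g.1, fun g => ⟨g, ⟨n, g⟩⟩⟩
    have e2 : {v : ℤ × ℤ | qf a b c v = p * n ∧ (p : ℤ) ∣ v.1 - t * v.2} ∩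
      {v : ℤ × ℤ | qf a b c v = p * n ∧ (p : ℤ) ∣ v.1 - t' * v.2} =
      {v : ℤ × ℤ | qf a b c v = p * n ∧ (p : ℤ) ∣ v.1 ∧ (p : ℤ) ∣ v.2} := by
      ext v
      simp only [Set.mem_inter_iff, Set.mem_ofPred_eq]
      constructor
      · rintro ⟨⟨g1, g2⟩, _, g3⟩
        exact ⟨g1, hb v g2 g3⟩
      · rintro ⟨g1, g2, g3⟩
        exact ⟨⟨g1, dvd_sub g2 (g3.mul_left _)⟩, ⟨g1, dvd_sub g2 (g3.mul_left _)⟩⟩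
    rw [e1, e2] at this
    rw [hc]
    unfold rr at this ⊢
    push_cast [← @Nat.cast_inj ℤ] at this
    linarith
  · have h1 := hA t ((h _).2 (by simp))
    rw [hc, ← h1]
    simp only [rr, add_zero, one_mul, zero_mul, sub_zero]
    congr 2
    ext v
    simp only [Set.mem_ofPred_eq, ← h v]
    exact ⟨fun g => ⟨g, ⟨n, g⟩⟩, fun g => g.1⟩
  · rw [hc]
    simp only [rr, add_neg_cancel, zero_mul, zero_sub, neg_mul, one_mul, neg_neg]
    congr 2
    ext v
    simp only [Set.mem_ofPred_eq]
    exact ⟨fun g => ⟨g, h v ⟨n, g⟩⟩, fun g => g.1⟩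
def cv (f g : ℕ → ℤ) (n : ℕ) : ℤ := ∑ x ∈ n.divisorsAntidiagonal, f x.1 * g x.2

lemma cv_rec (f g : ℕ → ℤ) (hf : ∀ m n, f (m * n) = f m * f n) (hg : ∀ m n, g (m * n) = g m * g n)
    (p : ℕ) (hp : p.Prime) (n : ℕ) (hn : 0 < n) :
    cv f g (p * n) = (f p + g p) * cv f g n - f p * g p * (if p ∣ n then cv f g (n / p) else 0) := by
  classical
  have hp0 := hp.pos
  have h := Finset.sum_union_inter (s₁ := n.divisorsAntidiagonal.image (fun x => (p * x.1, x.2)))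
    (s₂ := n.divisorsAntidiagonal.image (fun x => (x.1, p * x.2))) (f := fun x => f x.1 * g x.2)
  have e1 : n.divisorsAntidiagonal.image (fun x => (p * x.1, x.2)) ∪
      n.divisorsAntidiagonal.image (fun x => (x.1, p * x.2)) = (p * n).divisorsAntidiagonal := by
    ext ⟨x, y⟩
    simp only [Finset.mem_union, Finset.mem_image, Nat.mem_divisorsAntidiagonal, Prod.exists,
      Prod.mk.injEq]
    constructor
    · rintro (⟨x, y, ⟨rfl, h⟩, rfl, rfl⟩ | ⟨x, y, ⟨rfl, h⟩, rfl, rfl⟩)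
      · exact ⟨by ring, mul_ne_zero hp0.ne' h⟩
      · exact ⟨by ring, mul_ne_zero hp0.ne' h⟩
    · rintro ⟨h, -⟩
      have : p ∣ x * y := ⟨n, h⟩
      rcases (Nat.Prime.dvd_mul hp).1 this with ⟨z, rfl⟩ | ⟨z, rfl⟩
      · left
        refine ⟨z, y, ⟨?_, hn.ne'⟩, rfl, rfl⟩
        exact Nat.eq_of_mul_eq_mul_left hp0 (by rw [← h]; ring)
      · right
        refine ⟨x, z, ⟨?_, hn.ne'⟩, rfl, rfl⟩
        exact Nat.eq_of_mul_eq_mul_left hp0 (by rw [← h]; ring)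
  have e2 : ∑ x ∈ n.divisorsAntidiagonal.image (fun x => (p * x.1, x.2)) ∩
      n.divisorsAntidiagonal.image (fun x => (x.1, p * x.2)), f x.1 * g x.2 =
      f p * g p * (if p ∣ n then cv f g (n / p) else 0) := by
    split_ifs with hd
    · obtain ⟨m, rfl⟩ := hd
      rw [Nat.mul_div_cancel_left _ hp0]
      have : (p * m).divisorsAntidiagonal.image (fun x => (p * x.1, x.2)) ∩
        (p * m).divisorsAntidiagonal.image (fun x => (x.1, p * x.2)) =
        m.divisorsAntidiagonal.image (fun x => (p * x.1, p * x.2)) := by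
        ext ⟨x, y⟩
        simp only [Finset.mem_inter, Finset.mem_image, Nat.mem_divisorsAntidiagonal, Prod.exists,
          Prod.mk.injEq]
        constructor
        · rintro ⟨⟨x, y, ⟨h, h'⟩, rfl, rfl⟩, ⟨x', y', ⟨k, k'⟩, h1, rfl⟩⟩
          refine ⟨x, y', ⟨?_, right_ne_zero_of_mul h'⟩, rfl, rfl⟩
          exact Nat.eq_of_mul_eq_mul_left hp0 (by rw [← h]; ring)
        · rintro ⟨x, y, ⟨rfl, h⟩, rfl, rfl⟩
          exact ⟨⟨x, p * y, ⟨by ring, hn.ne'⟩, rfl, rfl⟩, ⟨p * x, y, ⟨by ring, hn.ne'⟩, rfl, rfl⟩⟩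
      rw [this, Finset.sum_image, cv, Finset.mul_sum]
      · apply Finset.sum_congr rfl
        intro x _
        rw [hf, hg]; ring
      · rintro ⟨x, y⟩ _ ⟨x', y'⟩ _ h
        simp only [Prod.mk.injEq] at h ⊢
        exact ⟨Nat.eq_of_mul_eq_mul_left hp0 h.1, Nat.eq_of_mul_eq_mul_left hp0 h.2⟩
    · rw [mul_zero]
      convert Finset.sum_empty
      ext ⟨x, y⟩
      simp only [Finset.mem_inter, Finset.mem_image, Nat.mem_divisorsAntidiagonal, Prod.exists,
        Prod.mk.injEq, Finset.notMem_empty, iff_false]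
      rintro ⟨⟨x, y, ⟨h, h'⟩, rfl, rfl⟩, ⟨x', y', ⟨k, k'⟩, h1, rfl⟩⟩
      exact hd ⟨x * y', by rw [← h]; ring⟩
  rw [e1, e2, Finset.sum_image, Finset.sum_image] at h
  · have a1 : ∑ x ∈ n.divisorsAntidiagonal, f (p * x.1) * g x.2 = f p * cv f g n := by
      rw [cv, Finset.mul_sum]
      exact Finset.sum_congr rfl fun x _ => by rw [hf]; ring
    have a2 : ∑ x ∈ n.divisorsAntidiagonal, f x.1 * g (p * x.2) = g p * cv f g n := by
      rw [cv, Finset.mul_sum]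
      exact Finset.sum_congr rfl fun x _ => by rw [hg]; ring
    simp only at h
    rw [a1, a2] at h
    have : cv f g (p * n) = ∑ x ∈ (p * n).divisorsAntidiagonal, f x.1 * g x.2 := rfl
    rw [this]
    linarith
  · rintro ⟨x, y⟩ _ ⟨x', y'⟩ _ h
    simp only [Prod.mk.injEq] at h ⊢
    exact ⟨h.1, Nat.eq_of_mul_eq_mul_left hp0 h.2⟩
  · rintro ⟨x, y⟩ _ ⟨x', y'⟩ _ h
    simp only [Prod.mk.injEq] at h ⊢
    exact ⟨Nat.eq_of_mul_eq_mul_left hp0 h.1, h.2⟩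

lemma chi3_mul (m n : ℕ) : chiNeg3 (m * n) = chiNeg3 m * chiNeg3 n := by
  unfold chiNeg3
  rw [Nat.mul_mod]
  have h1 : m % 3 < 3 := Nat.mod_lt _ (by norm_num)
  have h2 : n % 3 < 3 := Nat.mod_lt _ (by norm_num)
  generalize m % 3 = a at *
  generalize n % 3 = b at *
  interval_cases a <;> interval_cases b <;> rfl

lemma chi5_mul (m n : ℕ) : chi5 (m * n) = chi5 m * chi5 n := by
  unfold chi5
  rw [Nat.mul_mod]
  have h1 : m % 5 < 5 := Nat.mod_lt _ (by norm_num)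
  have h2 : n % 5 < 5 := Nat.mod_lt _ (by norm_num)
  generalize m % 5 = a at *
  generalize n % 5 = b at *
  interval_cases a <;> interval_cases b <;> rfl

lemma chi15_mul (m n : ℕ) : chiNeg15 (m * n) = chiNeg15 m * chiNeg15 n := by
  unfold chiNeg15
  rw [chi3_mul, chi5_mul]; ring

lemma rr_three_114 (n : ℤ) : rr 1 1 4 (3 * n) = rr 3 3 2 n := by
  have := card_sub (a := 1) (b := 1) (c := 4) (t := 1) (k := 2) 3 (by norm_num) (by norm_num) n
  norm_num at this
  rw [← this]
  unfold rr
  congr 1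
  ext ⟨x, y⟩
  simp only [Set.mem_ofPred_eq, qf]
  refine ⟨fun h => ⟨h, ?_⟩, fun h => h.1⟩
  have h2 : (3 : ℤ) ∣ (x - y) ^ 2 := ⟨n - x * y - y ^ 2, by linarith⟩
  exact Int.prime_three.dvd_of_dvd_pow h2

lemma rr_three_332 (n : ℤ) : rr 3 3 2 (3 * n) = rr 1 1 4 n := by
  rw [(eqv_swap 3 3 2).rr_eq]
  have := card_sub (a := 2) (b := 3) (c := 3) (t := 0) (k := 1) 3 (by norm_num) (by norm_num) n
  norm_num at this
  rw [← class1 (a := 6) (b := 3) (c := 1) (by norm_num) (by norm_num), ← this]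
  · unfold rr
    congr 1
    ext ⟨x, y⟩
    simp only [Set.mem_ofPred_eq, qf]
    refine ⟨fun h => ⟨h, ?_⟩, fun h => h.1⟩
    have h2 : (3 : ℤ) ∣ x ^ 2 := ⟨x ^ 2 - (n - x * y - y ^ 2), by linarith⟩
    exact Int.prime_three.dvd_of_dvd_pow h2
  · rintro ⟨x, y⟩
    have h : qf 6 3 1 (x, y) = y ^ 2 + 3 * (2 * x ^ 2 + x * y) := by simp [qf]; ring
    rw [h]
    have : y % 3 = 0 ∨ y % 3 = 1 ∨ y % 3 = 2 := by omega
    rcases this with h | h | h <;> simp [Int.add_emod, pow_two, Int.mul_emod, h]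

lemma sub_val {a b c t k : ℤ} (p : ℤ) (hk : a * t ^ 2 + b * t + c = p * k) (v : ℤ × ℤ) :
    p * qf (a * p) (2 * a * t + b) k v = qf a b c (p * v.1 + t * v.2, v.2) := by
  simp only [qf]
  linear_combination (-v.2 ^ 2) * hk

lemma sub_disc {a b c t k : ℤ} (p : ℤ) (hk : a * t ^ 2 + b * t + c = p * k)
    (hd : b ^ 2 - 4 * a * c = -15) : (2 * a * t + b) ^ 2 - 4 * (a * p) * k = -15 := by
  linear_combination hd + 4 * a * hk

theorem rr_main (n : ℕ) : 0 < n →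
    (rr 1 1 4 n : ℤ) = cv (fun _ => 1) chiNeg15 n + cv chiNeg3 chi5 n ∧
    (rr 3 3 2 n : ℤ) = cv (fun _ => 1) chiNeg15 n - cv chiNeg3 chi5 n := by
  induction n using Nat.strong_induction_on with
  | _ n ih =>
  intro hn
  by_cases h1 : n = 1
  · subst h1
    have c1 : cv (fun _ => 1) chiNeg15 1 = 1 := by decide
    have c2 : cv chiNeg3 chi5 1 = 1 := by decide
    rw [c1, c2]
    constructor
    · have : {v : ℤ × ℤ | qf 1 1 4 v = ((1 : ℕ) : ℤ)} = {(1, 0), (-1, 0)} := by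
        ext ⟨x, y⟩
        simp only [Set.mem_ofPred_eq, qf, Set.mem_insert_iff, Set.mem_singleton_iff, Prod.mk.injEq]
        constructor
        · intro h
          push_cast at h
          have hy : y = 0 := by
            have : 15 * y ^ 2 ≤ 4 := by nlinarith [sq_nonneg (2 * x + y)]
            have h1 : y < 1 := by nlinarith
            have h2 : -1 < y := by nlinarith
            omega
          subst hy
          have : x ^ 2 = 1 := by linarith
          have hx : (x - 1) * (x + 1) = 0 := by linarith
          rcases mul_eq_zero.1 hx with h | h
          · exact Or.inl ⟨by linarith, rfl⟩
          · exact Or.inr ⟨by linarith, rfl⟩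
        · rintro (⟨rfl, rfl⟩ | ⟨rfl, rfl⟩) <;> norm_num
      rw [rr, this, Set.ncard_pair (by simp)]; norm_num
    · have : {v : ℤ × ℤ | qf 3 3 2 v = ((1 : ℕ) : ℤ)} = ∅ := by
        ext v
        simp only [Set.mem_ofPred_eq, Set.mem_empty_iff_false, iff_false]
        intro h
        have := qf332_mod v
        rw [h] at this
        norm_num at this
      rw [rr, this]; simp
  obtain ⟨p, hp, m, rfl⟩ := Nat.exists_prime_and_dvd h1
  have hm : 0 < m := Nat.pos_of_mul_pos_left hn
  have hmn : m < p * m := by nlinarith [hp.two_le]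
  have r1 := cv_rec (fun _ => 1) chiNeg15 (by simp) chi15_mul p hp m hm
  have r2 := cv_rec chiNeg3 chi5 chi3_mul chi5_mul p hp m hm
  obtain ⟨i1, i2⟩ := ih m hmn hm
  rw [r1, r2]
  push_cast
  by_cases h3 : p = 3
  · subst h3
    have : chiNeg15 3 = 0 := by decide
    have k2 : chiNeg3 3 = 0 := by decide
    have k3 : chi5 3 = -1 := by decide
    rw [this, k2, k3]
    have a1 := rr_three_114 m
    have a2 := rr_three_332 m
    push_cast
    rw [a1, a2, i1, i2]
    constructor <;> ring
  have g3 : p % 3 ≠ 0 := fun h =>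
    h3 ((Nat.prime_dvd_prime_iff_eq Nat.prime_three hp).1 (Nat.dvd_of_mod_eq_zero h)).symm
  have hp0 : (0 : ℤ) < p := by exact_mod_cast hp.pos
  have n1 : ¬ (p : ℤ) ∣ 1 := by
    intro h
    have : p ∣ 1 := by exact_mod_cast h
    exact hp.one_lt.ne' (Nat.dvd_one.1 this)
  have n3 : ¬ (p : ℤ) ∣ 3 := by
    intro h
    have : p ∣ 3 := by exact_mod_cast h
    exact h3 ((Nat.prime_dvd_prime_iff_eq hp Nat.prime_three).1 this)
  have hite : ∀ a b c : ℤ, (if (p : ℤ) ∣ (m : ℤ) then (rr a b c ((m : ℤ) / p) : ℤ) else 0) =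
      if p ∣ m then (rr a b c ((m / p : ℕ) : ℤ) : ℤ) else 0 := by
    intro a b c
    simp [Int.natCast_dvd_natCast]
  have j : p ∣ m → (rr 1 1 4 (m / p : ℕ) : ℤ) = cv (fun _ => 1) chiNeg15 (m / p) + cv chiNeg3 chi5 (m / p) ∧
    (rr 3 3 2 (m / p : ℕ) : ℤ) = cv (fun _ => 1) chiNeg15 (m / p) - cv chiNeg3 chi5 (m / p) := by
    intro hpm
    exact ih _ (lt_of_le_of_lt (Nat.div_le_self _ _) hmn) (Nat.div_pos (Nat.le_of_dvd hm hpm) hp.pos)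
  have hc : p % 3 = 1 ∨ p % 3 = 2 := by omega
  rcases hc with hc | hc
  · have hc' : (p : ℤ) % 3 = 1 := by omega
    have x3 : chiNeg3 p = 1 := by simp [chiNeg3, hc]
    have H1 := hecke (a := 1) (b := 1) (c := 4) (a' := 1) (b' := 1) (c' := 4) (by norm_num) (by norm_num) p hp h3 n1 (by
      intro t k hk n
      apply class1 (by linarith) (sub_disc _ hk (by norm_num))
      intro v hv
      have e := sub_val _ hk v
      have := qf114_mod (p * v.1 + t * v.2, v.2)
      rw [← e, Int.mul_emod, hv, hc'] at this
      norm_num at this) m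
    have H2 := hecke (a := 3) (b := 3) (c := 2) (a' := 3) (b' := 3) (c' := 2) (by norm_num) (by norm_num) p hp h3 n3 (by
      intro t k hk n
      apply class2 (by linarith) (sub_disc _ hk (by norm_num))
      intro v hv
      have e := sub_val _ hk v
      have := qf332_mod (p * v.1 + t * v.2, v.2)
      rw [← e, Int.mul_emod, hv, hc'] at this
      norm_num at this) m
    rw [H1, H2, hite, hite, i1, i2]
    simp only [chiNeg15, x3]
    split_ifs with hpm
    · obtain ⟨j1, j2⟩ := j hpm
      rw [j1, j2]
      constructor <;> ring
    · constructor <;> ring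
  · have hc' : (p : ℤ) % 3 = 2 := by omega
    have x3 : chiNeg3 p = -1 := by simp [chiNeg3, hc]
    have H1 := hecke (a := 1) (b := 1) (c := 4) (a' := 3) (b' := 3) (c' := 2) (by norm_num) (by norm_num) p hp h3 n1 (by
      intro t k hk n
      apply class2 (by linarith) (sub_disc _ hk (by norm_num))
      intro v hv
      have e := sub_val _ hk v
      have := qf114_mod (p * v.1 + t * v.2, v.2)
      rw [← e, Int.mul_emod, hv, hc'] at this
      norm_num at this) m
    have H2 := hecke (a := 3) (b := 3) (c := 2) (a' := 1) (b' := 1) (c' := 4) (by norm_num) (by norm_num) p hp h3 n3 (by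
      intro t k hk n
      apply class1 (by linarith) (sub_disc _ hk (by norm_num))
      intro v hv
      have e := sub_val _ hk v
      have := qf332_mod (p * v.1 + t * v.2, v.2)
      rw [← e, Int.mul_emod, hv, hc'] at this
      norm_num at this) m
    rw [H1, H2, hite, hite, i1, i2]
    simp only [chiNeg15, x3]
    split_ifs with hpm
    · obtain ⟨j1, j2⟩ := j hpm
      rw [j1, j2]
      constructor <;> ring
    · constructor <;> ring
lemma chi3_norm (n : ℕ) : ‖((chiNeg3 n : ℤ) : ℂ)‖ ≤ 1 := by
  unfold chiNeg3; split_ifs <;> simp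

lemma chi5_norm (n : ℕ) : ‖((chi5 n : ℤ) : ℂ)‖ ≤ 1 := by
  unfold chi5; split_ifs <;> simp

lemma chi15_norm (n : ℕ) : ‖((chiNeg15 n : ℤ) : ℂ)‖ ≤ 1 := by
  unfold chiNeg15
  push_cast
  rw [norm_mul]
  exact mul_le_one₀ (chi3_norm n) (norm_nonneg _) (chi5_norm n)

lemma LSer_eq (χ : ℕ → ℤ) (s : ℂ) (h : LSeriesSummable (fun n => (χ n : ℂ)) s) :
    LSer χ s = LSeries (fun n => (χ n : ℂ)) s := by
  unfold LSer LSeries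
  rw [Summable.tsum_eq_zero_add h]
  simp [LSeries.term]

/-- value of the form as a natural number -/
def qval (p : {p : ℤ × ℤ // p ≠ 0}) : ℕ := (qf 1 1 4 p.1).toNat

lemma qf_pos (p : {p : ℤ × ℤ // p ≠ 0}) : 0 < qf 1 1 4 p.1 := by
  obtain ⟨⟨x, y⟩, h⟩ := p
  simp only [qf]
  by_contra hc
  push Not at hc
  have hy : y = 0 := by
    have : y ^ 2 ≤ 0 := by nlinarith [sq_nonneg (2 * x + y)]
    exact pow_eq_zero_iff two_ne_zero |>.1 (le_antisymm this (sq_nonneg _))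
  subst hy
  have hx : x = 0 := by
    have : x ^ 2 ≤ 0 := by linarith
    exact pow_eq_zero_iff two_ne_zero |>.1 (le_antisymm this (sq_nonneg _))
  subst hx
  exact h rfl

lemma qval_cast (p : {p : ℤ × ℤ // p ≠ 0}) : ((qval p : ℕ) : ℤ) = qf 1 1 4 p.1 :=
  Int.toNat_of_nonneg (qf_pos p).le

def fibE (n : ℕ) (hn : 0 < n) :
    {p : {p : ℤ × ℤ // p ≠ 0} // qval p = n} ≃ {v : ℤ × ℤ | qf 1 1 4 v = n} where
  toFun p := ⟨p.1.1, by
    have := qval_cast p.1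
    rw [p.2] at this
    exact this.symm⟩
  invFun v := ⟨⟨v.1, by
    intro h
    have := v.2
    rw [h] at this
    simp [qf] at this
    omega⟩, by
    have : qf 1 1 4 v.1 = n := v.2
    simp [qval, this]⟩
  left_inv p := rfl
  right_inv v := rfl

lemma fib_finite (n : ℕ) : Finite {p : {p : ℤ × ℤ // p ≠ 0} // qval p = n} := by
  rcases Nat.eq_zero_or_pos n with rfl | hn
  · have : IsEmpty {p : {p : ℤ × ℤ // p ≠ 0} // qval p = 0} := ⟨fun p => by
      have h1 := qf_pos p.1
      have h2 := qval_cast p.1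
      have := p.2
      omega⟩
    infer_instance
  · have := (qf_finite (a := 1) (b := 1) (c := 4) (by norm_num) (by norm_num) n).to_subtype
    exact Finite.of_equiv _ (fibE n hn).symm

lemma fib_card (n : ℕ) (hn : 0 < n) :
    Nat.card {p : {p : ℤ × ℤ // p ≠ 0} // qval p = n} = rr 1 1 4 n := by
  rw [Nat.card_congr (fibE n hn)]
  rfl

lemma fib_card_zero :
    Nat.card {p : {p : ℤ × ℤ // p ≠ 0} // qval p = 0} = 0 := by
  have : IsEmpty {p : {p : ℤ × ℤ // p ≠ 0} // qval p = 0} := ⟨fun p => by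
      have h1 := qf_pos p.1
      have h2 := qval_cast p.1
      have := p.2
      omega⟩
  simp

/-- Zucker–Robertson: for `Re(s) > 1`,
`Q(1,1,4; s) = ζ(s) L(χ₋₁₅, s) + L(χ₋₃, s) L(χ₅, s)`. -/
theorem Q114_eq (s : ℂ) (hs : 1 < s.re) :
    (∑' p : {p : ℤ × ℤ // p ≠ 0},
        1 / (((p.1.1 : ℂ) ^ 2 + (p.1.1 : ℂ) * (p.1.2 : ℂ) + 4 * (p.1.2 : ℂ) ^ 2) ^ s)) =
      riemannZeta s * LSer chiNeg15 s + LSer chiNeg3 s * LSer chi5 s := by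
  have s3 : LSeriesSummable (fun n => (chiNeg3 n : ℂ)) s :=
    LSeriesSummable_of_bounded_of_one_lt_re (fun n _ => chi3_norm n) hs
  have s5 : LSeriesSummable (fun n => (chi5 n : ℂ)) s :=
    LSeriesSummable_of_bounded_of_one_lt_re (fun n _ => chi5_norm n) hs
  have s15 : LSeriesSummable (fun n => (chiNeg15 n : ℂ)) s :=
    LSeriesSummable_of_bounded_of_one_lt_re (fun n _ => chi15_norm n) hs
  have s1 : LSeriesSummable (1 : ℕ → ℂ) s :=
    LSeriesSummable_of_bounded_of_one_lt_re (m := 1) (fun n _ => by simp) hs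
  rw [LSer_eq _ s s3, LSer_eq _ s s5, LSer_eq _ s s15, ← LSeries_one_eq_riemannZeta hs,
    ← LSeries_convolution' s1 s15, ← LSeries_convolution' s3 s5]
  have S1 := s1.convolution s15
  have S2 := s3.convolution s5
  rw [← LSeries_add S1 S2]
  have S := S1.add S2
  set R : ℕ → ℂ := LSeries.convolution (1 : ℕ → ℂ) (fun n => (chiNeg15 n : ℂ)) +
    LSeries.convolution (fun n => (chiNeg3 n : ℂ)) (fun n => (chi5 n : ℂ)) with hR
  have hcard : ∀ n : ℕ, (Nat.card {p : {p : ℤ × ℤ // p ≠ 0} // qval p = n} : ℂ) = R n := by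
    intro n
    rcases Nat.eq_zero_or_pos n with rfl | hn
    · rw [fib_card_zero]; simp [hR]
    · rw [fib_card n hn]
      have := (rr_main n hn).1
      have h2 : ((rr 1 1 4 n : ℤ) : ℂ) = ((cv (fun _ => 1) chiNeg15 n + cv chiNeg3 chi5 n : ℤ) : ℂ) := by
        rw [this]
      rw [Int.cast_natCast] at h2
      rw [h2, hR]
      simp [LSeries.convolution_def, cv]
  have hterm : ∀ n : ℕ, (Nat.card {p : {p : ℤ × ℤ // p ≠ 0} // qval p = n} : ℂ) * (1 / (n : ℂ) ^ s)
      = LSeries.term R s n := by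
    intro n
    rcases Nat.eq_zero_or_pos n with rfl | hn
    · rw [fib_card_zero]; simp
    · rw [hcard, LSeries.term_of_ne_zero hn.ne']; ring
  have hval : ∀ p : {p : ℤ × ℤ // p ≠ 0},
      1 / (((p.1.1 : ℂ) ^ 2 + (p.1.1 : ℂ) * (p.1.2 : ℂ) + 4 * (p.1.2 : ℂ) ^ 2) ^ s) =
      1 / ((qval p : ℕ) : ℂ) ^ s := by
    intro p
    have : ((qval p : ℕ) : ℂ) = ((qf 1 1 4 p.1 : ℤ) : ℂ) := by
      rw [← qval_cast p, Int.cast_natCast]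
    rw [this]
    simp [qf]
  simp_rw [hval]
  rw [← (Equiv.sigmaFiberEquiv qval).tsum_eq]
  have hfib : ∀ (n : ℕ) (x : {p : {p : ℤ × ℤ // p ≠ 0} // qval p = n}),
      (1 / ((qval ((Equiv.sigmaFiberEquiv qval) ⟨n, x⟩) : ℕ) : ℂ) ^ s) = 1 / (n : ℂ) ^ s := by
    intro n x
    have : qval ((Equiv.sigmaFiberEquiv qval) ⟨n, x⟩) = n := x.2
    rw [this]
  have hsum : Summable (fun q : (Σ n : ℕ, {p : {p : ℤ × ℤ // p ≠ 0} // qval p = n}) =>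
      (1 / ((qval ((Equiv.sigmaFiberEquiv qval) q) : ℕ) : ℂ) ^ s)) := by
    apply Summable.of_norm
    rw [summable_sigma_of_nonneg (fun _ => norm_nonneg _)]
    constructor
    · intro n
      have := fib_finite n
      exact Summable.of_finite
    · have hn := S.norm
      convert hn using 2 with n
      have e : ∀ x : {p : {p : ℤ × ℤ // p ≠ 0} // qval p = n},
        ‖(1 / ((qval ((Equiv.sigmaFiberEquiv qval) ⟨n, x⟩) : ℕ) : ℂ) ^ s)‖ = ‖1 / (n : ℂ) ^ s‖ :=
        fun x => by rw [hfib n x]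
      rw [tsum_congr e, tsum_const, ← hterm, norm_mul, nsmul_eq_mul]
      simp
  rw [hsum.tsum_sigma, LSeries]
  apply tsum_congr
  intro n
  rw [tsum_congr (hfib n), tsum_const, ← hterm, nsmul_eq_mul]
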